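/- Let N, d, C be natural numbers at least 2, let p ∈ (0, ∞], q ∈ [1, ∞], let k be a natural number with 7 ≤ k ≤ d + 5, and let σ, δ > 0 satisfy σ/δ ≤ a_{p,q,d} · N^{−2/(k−6)}, where a_{p,q,d} = (1/(8√e)) · d^{−1/2 + [1/2 − 1/q]_− + [1/p − 1/2]_−} (with 1/∞ = 0). Then there is a universal constant C₀ such that for every (δ, q)-separated dataset D of size N with C classes in ℝ^d, there exists a feedforward ReLU neural network f : ℝ^d → ℝ of width k and depth at most C₀ · N · k · log₂(k) that (σ, p)-robustly memorizes D. -/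

import Mathlib

open scoped ENNReal BigOperators

noncomputable section

/-- A multilayer perceptron (feedforward ReLU network) with input dimension `m`
and output dimension `n`, given as a nonempty list of affine layers. -/
inductive MLP : ℕ → ℕ → Type
  | last : {m n : ℕ} → Matrix (Fin n) (Fin m) ℝ → (Fin n → ℝ) → MLP m n
  | cons : {m h n : ℕ} → Matrix (Fin h) (Fin m) ℝ → (Fin h → ℝ) → MLP h n → MLP m n

/-- Evaluation of an MLP: every affine layer except the last is followed by a
coordinatewise ReLU. -/
def MLP.eval : {m n : ℕ} → MLP m n → (Fin m → ℝ) → Fin n → ℝ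
  | _, _, .last W b, x => W.mulVec x + b
  | _, _, .cons W b rest, x => MLP.eval rest fun i => max ((W.mulVec x + b) i) 0

/-- Depth of an MLP: the number of affine layers. -/
def MLP.depth : {m n : ℕ} → MLP m n → ℕ
  | _, _, .last _ _ => 1
  | _, _, .cons _ _ rest => MLP.depth rest + 1

/-- Width of an MLP: the maximum of the hidden-layer dimensions. -/
def MLP.width : {m n : ℕ} → MLP m n → ℕ
  | _, _, .last _ _ => 0
  | _, _, @MLP.cons _ h _ _ _ rest => max h (MLP.width rest)

/-- The `l_p` (quasi-)norm on `ℝ^d`, for `p ∈ (0,∞]`. -/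
def lpNorm (p : ℝ≥0∞) {d : ℕ} (x : Fin d → ℝ) : ℝ :=
  if p = ⊤ then ⨆ i, |x i| else (∑ i, |x i| ^ p.toReal) ^ (1 / p.toReal)

/-- The `l_p` norm on `ℝ^d` with a real exponent `p`. -/
def lpNormR (p : ℝ) {d : ℕ} (x : Fin d → ℝ) : ℝ := (∑ i, |x i| ^ p) ^ (1 / p)

/-- `1/p`, with the convention `1/∞ = 0`. -/
def rinv (p : ℝ≥0∞) : ℝ := if p = ⊤ then 0 else 1 / p.toReal

/-- `c_p^+(d) = d^{[1/2 - 1/p]_+}`. -/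
def cplus (p : ℝ≥0∞) (d : ℕ) : ℝ := (d : ℝ) ^ max ((1 : ℝ) / 2 - rinv p) 0

/-- `c_p^-(d) = d^{[1/2 - 1/p]_-}`. -/
def cminus (p : ℝ≥0∞) (d : ℕ) : ℝ := (d : ℝ) ^ min ((1 : ℝ) / 2 - rinv p) 0

/-- A dataset is `(δ, q)`-separated if the minimal `l_q` distance between
differently labeled points equals `δ`. -/
def Separated {N d : ℕ} (q : ℝ≥0∞) (δ : ℝ) (X : Fin N → Fin d → ℝ) (Y : Fin N → ℕ) : Prop :=
  (∀ i j, Y i ≠ Y j → δ ≤ lpNorm q (X i - X j)) ∧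
    ∃ i j, Y i ≠ Y j ∧ lpNorm q (X i - X j) = δ

/-- `f` `(σ, p)`-robustly memorizes the dataset `(X, Y)`. -/
def RobustMem {N d : ℕ} (p : ℝ≥0∞) (σ : ℝ) (X : Fin N → Fin d → ℝ) (Y : Fin N → ℕ)
    (f : (Fin d → ℝ) → ℝ) : Prop :=
  ∀ i, ∀ x : Fin d → ℝ, lpNorm p (x - X i) ≤ σ → f x = (Y i : ℝ)

/-- A matrix `M` `(σ, k)`-preserves a dataset: Euclidean distances between points of
`σ`-neighborhoods (in `l₂`) of differently labeled data points do not decrease. -/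
def Preserves {N d m : ℕ} (σ : ℝ) (X : Fin N → Fin d → ℝ) (Y : Fin N → ℕ)
    (M : Matrix (Fin m) (Fin d) ℝ) : Prop :=
  ∀ i j, Y i ≠ Y j → ∀ a a' : Fin d → ℝ,
    lpNorm 2 (a - X i) ≤ σ → lpNorm 2 (a' - X j) ≤ σ →
      lpNorm 2 (a - a') ≤ lpNorm 2 (M.mulVec a - M.mulVec a')

/-- The `l₂ → l₂` (spectral) operator norm of a matrix. -/
def matOpNorm {m d : ℕ} (M : Matrix (Fin m) (Fin d) ℝ) : ℝ :=
  sSup {c | ∃ x : Fin d → ℝ, lpNorm 2 x ≤ 1 ∧ c = lpNorm 2 (M.mulVec x)}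

/-- Generalized binomial coefficient `C(s, m) = s(s-1)⋯(s-m+1)/m!`. -/
def gchoose (s : ℝ) (m : ℕ) : ℝ := (∏ i ∈ Finset.range m, (s - (i : ℝ))) / (m.factorial : ℝ)

/-!
For a Gaussian vector `r` and a fixed `u` in `ℝ^d`, `|⟪u, r⟫| < t ‖u‖` has probability at most `t`,
and `‖r‖` is typically `√d`. Hence, when `(2 t) ^ m * N ^ 2 < 1`, one can pick `m` vectors of norm
at most `√(2 d)` such that each of the `N ^ 2` differences `u` of data points has an inner product
at least `t ‖u‖` in absolute value with one of them. As the rows of a matrix, they map the data to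
`ℝ^m` with the sup norm, sending balls around differently labelled points into separated boxes as
long as `σ / δ` is of order `N ^ (-2 / m) / √d`; comparing `l_p` and `l_q` with `l_2` accounts for
the remaining powers of `d`.

In `ℝ^m` let `gap i` be the sum of the `2 m` hinges vanishing on the `i`-th box. The functions
`y i - κ i * gap i` equal `y i` on their own box, never exceed `y i`, and are nonpositive on
every box with another label, so their maximum with `0` memorizes the labels. A network computes
it one hinge per layer, its `m + 3` units holding the `m` coordinates, the running maximum, the
running gap and the current hinge.
-/

section LpNorm

variable {d : ℕ} {p q : ℝ≥0∞}

theorem abs_apply_le_lpNorm (hp : 0 < p) (x : Fin d → ℝ) (i : Fin d) : |x i| ≤ lpNorm p x := by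
  rcases eq_or_ne p ⊤ with rfl | hp_top
  · rw [lpNorm, if_pos rfl]
    exact le_ciSup (Set.finite_range fun j => |x j|).bddAbove i
  · have hp' : 0 < p.toReal := ENNReal.toReal_pos hp.ne' hp_top
    rw [lpNorm, if_neg hp_top, one_div, Real.le_rpow_inv_iff_of_pos (abs_nonneg _) _ hp']
    · exact Finset.single_le_sum (f := fun j => |x j| ^ p.toReal) (fun _ _ => by positivity)
        (Finset.mem_univ i)
    · positivity

theorem lpNorm_nonneg (x : Fin d → ℝ) : 0 ≤ lpNorm p x := by
  unfold lpNorm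
  split_ifs
  · exact Real.iSup_nonneg fun i => abs_nonneg _
  · positivity

theorem lpNorm_rpow_toReal (hp : 0 < p) (hp_top : p ≠ ⊤) (x : Fin d → ℝ) :
    lpNorm p x ^ p.toReal = ∑ i, |x i| ^ p.toReal := by
  rw [lpNorm, if_neg hp_top, one_div, Real.rpow_inv_rpow (by positivity)
    (ENNReal.toReal_pos hp.ne' hp_top).ne']

theorem lpNorm_antitone (hp : 0 < p) (hpq : p ≤ q) (x : Fin d → ℝ) :
    lpNorm q x ≤ lpNorm p x := by
  rcases eq_or_ne q ⊤ with rfl | hq_top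
  · rw [lpNorm, if_pos rfl]
    exact Real.iSup_le (abs_apply_le_lpNorm hp x) (lpNorm_nonneg x)
  have hq : 0 < q := hp.trans_le hpq
  have hp_top : p ≠ ⊤ := ne_top_of_le_ne_top hq_top hpq
  have hpq' : 0 ≤ q.toReal - p.toReal := sub_nonneg.2 (ENNReal.toReal_mono hq_top hpq)
  have split_exponent {a : ℝ} (ha : 0 ≤ a) :
      a ^ q.toReal = a ^ p.toReal * a ^ (q.toReal - p.toReal) := by
    rw [← Real.rpow_add_of_nonneg ha ENNReal.toReal_nonneg hpq', add_sub_cancel]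
  rw [← Real.rpow_le_rpow_iff (lpNorm_nonneg x) (lpNorm_nonneg x)
    (ENNReal.toReal_pos hq.ne' hq_top)]
  calc lpNorm q x ^ q.toReal
      = ∑ i, |x i| ^ p.toReal * |x i| ^ (q.toReal - p.toReal) := by
        simp only [lpNorm_rpow_toReal hq hq_top, split_exponent (abs_nonneg _)]
    _ ≤ ∑ i, |x i| ^ p.toReal * lpNorm p x ^ (q.toReal - p.toReal) := by
        gcongr with i
        exact abs_apply_le_lpNorm hp x i
    _ = lpNorm p x ^ q.toReal := by
        rw [← Finset.sum_mul, ← lpNorm_rpow_toReal hp hp_top, ← split_exponent (lpNorm_nonneg x)]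

theorem rinv_eq (p : ℝ≥0∞) : rinv p = 1 / p.toReal := by
  rcases eq_or_ne p ⊤ with rfl | hp <;> simp [rinv, *]

theorem rinv_antitone (hp : 0 < p) (hpq : p ≤ q) : rinv q ≤ rinv p := by
  rcases eq_or_ne q ⊤ with rfl | hq_top
  · simp [rinv_eq]
  · rw [rinv_eq, rinv_eq]
    exact one_div_le_one_div_of_le (ENNReal.toReal_pos hp.ne' (ne_top_of_le_ne_top hq_top hpq))
      (ENNReal.toReal_mono hq_top hpq)

open MeasureTheory in
theorem lpNorm_eq_toReal_eLpNorm_count (hp : 0 < p) (x : Fin d → ℝ) :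
    _root_.lpNorm p x = (eLpNorm x p Measure.count).toReal := by
  rcases eq_or_ne p ⊤ with rfl | hp_top
  · simp [_root_.lpNorm, ENNReal.toReal_iSup]
  · rw [_root_.lpNorm, if_neg hp_top, eLpNorm_eq_lintegral_rpow_enorm_toReal hp.ne' hp_top,
      lintegral_count, tsum_fintype, ← ENNReal.toReal_rpow, ENNReal.toReal_sum]
    · simp [← ENNReal.toReal_rpow]
    · simp

open MeasureTheory in
theorem lpNorm_le_rpow_mul_lpNorm (hp : 0 < p) (hpq : p ≤ q) (x : Fin d → ℝ) :
    _root_.lpNorm p x ≤ (d : ℝ) ^ (rinv p - rinv q) * _root_.lpNorm q x := by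
  have hfin : eLpNorm x q Measure.count * Measure.count (Set.univ : Set (Fin d)) ^
      (1 / p.toReal - 1 / q.toReal) ≠ ⊤ := by
    refine ENNReal.mul_ne_top (eLpNorm_count_lt_top_of_lt fun i => by simp).ne ?_
    refine ENNReal.rpow_ne_top_of_nonneg ?_ (by simp)
    simpa only [rinv_eq, sub_nonneg] using rinv_antitone hp hpq
  rw [lpNorm_eq_toReal_eLpNorm_count hp, lpNorm_eq_toReal_eLpNorm_count (hp.trans_le hpq),
    rinv_eq, rinv_eq]
  refine (ENNReal.toReal_mono hfin (eLpNorm_le_eLpNorm_mul_rpow_measure_univ hpq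
    (by fun_prop))).trans_eq ?_
  simp [mul_comm, ← ENNReal.toReal_rpow]

theorem lpNorm_le_rpow_max_mul_lpNorm (hp : 0 < p) (hq : 0 < q) (x : Fin d → ℝ) :
    lpNorm p x ≤ (d : ℝ) ^ max (rinv p - rinv q) 0 * lpNorm q x := by
  rcases le_total p q with hpq | hqp
  · rw [max_eq_left (sub_nonneg.2 (rinv_antitone hp hpq))]
    exact lpNorm_le_rpow_mul_lpNorm hp hpq x
  · rw [max_eq_right (sub_nonpos.2 (rinv_antitone hq hqp)), Real.rpow_zero, one_mul]
    exact lpNorm_antitone hq hqp x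

theorem lpNorm_two_le_cplus_mul_lpNorm (hp : 0 < p) (x : Fin d → ℝ) :
    lpNorm 2 x ≤ cplus p d * lpNorm p x := by
  simpa [cplus, rinv_eq 2] using lpNorm_le_rpow_max_mul_lpNorm two_pos hp x

theorem cminus_mul_lpNorm_le_lpNorm_two (hd : 0 < d) (hq : 0 < q) (x : Fin d → ℝ) :
    cminus q d * lpNorm q x ≤ lpNorm 2 x := by
  have h := lpNorm_le_rpow_max_mul_lpNorm hq two_pos x
  rw [← neg_sub, ← neg_zero, max_neg_neg, Real.rpow_neg (by positivity), rinv_eq 2] at h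
  simpa [cminus] using (le_inv_mul_iff₀ (by positivity)).1 h

theorem lpNorm_two_eq_norm (x : Fin d → ℝ) : lpNorm 2 x = ‖WithLp.toLp 2 x‖ := by
  simp [lpNorm, EuclideanSpace.norm_eq, Real.sqrt_eq_rpow]

end LpNorm

section GaussianProjection

open MeasureTheory ProbabilityTheory
open scoped RealInnerProductSpace NNReal

theorem gaussianPDFReal_le (μ : ℝ) (v : ℝ≥0) (x : ℝ) :
    gaussianPDFReal μ v x ≤ (√(2 * Real.pi * v))⁻¹ := by
  refine mul_le_of_le_one_right (by positivity) (Real.exp_le_one_iff.2 ?_)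
  exact div_nonpos_of_nonpos_of_nonneg (neg_nonpos.2 (sq_nonneg _)) (by positivity)

theorem gaussianReal_le_volume (μ : ℝ) {v : ℝ≥0} (hv : v ≠ 0) (s : Set ℝ) :
    gaussianReal μ v s ≤ ENNReal.ofReal (√(2 * Real.pi * v))⁻¹ * volume s := by
  rw [gaussianReal_apply μ hv]
  calc ∫⁻ x in s, gaussianPDF μ v x
      ≤ ∫⁻ _ in s, ENNReal.ofReal (√(2 * Real.pi * v))⁻¹ :=
        lintegral_mono fun x => ENNReal.ofReal_le_ofReal (gaussianPDFReal_le μ v x)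
    _ = _ := setLIntegral_const s _

theorem gaussianReal_zero_Ioo_le {v : ℝ≥0} {t : ℝ} (ht : 0 ≤ t) :
    (gaussianReal 0 v).real (Set.Ioo (-(t * √v)) (t * √v)) ≤ t := by
  rcases eq_or_ne v 0 with rfl | hv
  · simpa using ht
  have : 0 < (v : ℝ) := by positivity
  refine ENNReal.toReal_le_of_le_ofReal ht ((gaussianReal_le_volume 0 hv _).trans ?_)
  rw [Real.volume_Ioo, ← ENNReal.ofReal_mul (by positivity)]
  refine ENNReal.ofReal_le_ofReal ?_
  have two_le : 2 ≤ √(2 * Real.pi) := by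
    rw [Real.le_sqrt' two_pos]
    linarith [Real.pi_gt_three]
  rw [Real.sqrt_mul Real.two_pi_pos.le, inv_mul_le_iff₀ (by positivity)]
  calc t * √v - -(t * √v) = 2 * √v * t := by ring
    _ ≤ √(2 * Real.pi) * √v * t := by gcongr

theorem exists_le_two_mul_and_le_two_mul {Ω : Type*} [MeasurableSpace Ω] {μ : Measure Ω}
    [IsProbabilityMeasure μ] {f g : Ω → ℝ} {a b : ℝ} (hf : Integrable f μ) (hg : Integrable g μ)
    (hf_nonneg : 0 ≤ f) (hg_nonneg : 0 ≤ g) (ha : 0 < a) (hb : 0 < b)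
    (hfa : ∫ ω, f ω ∂μ ≤ a) (hgb : ∫ ω, g ω ∂μ ≤ b) :
    ∃ ω, f ω ≤ 2 * a ∧ g ω ≤ 2 * b := by
  obtain ⟨ω, hω⟩ := exists_le_integral ((hf.div_const a).add (hg.div_const b))
  have sum_le_two : f ω / a + g ω / b ≤ 2 := by
    refine hω.trans ?_
    simp only [Pi.add_apply]
    rw [integral_add (hf.div_const a) (hg.div_const b), integral_div, integral_div]
    linarith [(div_le_one ha).2 hfa, (div_le_one hb).2 hgb]
  have hfω : 0 ≤ f ω / a := div_nonneg (hf_nonneg ω) ha.le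
  have hgω : 0 ≤ g ω / b := div_nonneg (hg_nonneg ω) hb.le
  exact ⟨ω, (div_le_iff₀ ha).1 (by linarith), (div_le_iff₀ hb).1 (by linarith)⟩

variable {E : Type*} [NormedAddCommGroup E] [InnerProductSpace ℝ E] [FiniteDimensional ℝ E]
  [MeasurableSpace E] [BorelSpace E]

theorem stdGaussian_map_inner (u : E) :
    (stdGaussian E).map (fun r => ⟪u, r⟫) = gaussianReal 0 (‖u‖₊ ^ 2) := by
  have h := IsGaussian.map_eq_gaussianReal (μ := stdGaussian E) (innerSL ℝ u)
  rw [integral_strongDual_stdGaussian, variance_dual_stdGaussian, innerSL_apply_norm] at h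
  rw [← norm_toNNReal, ← Real.toNNReal_pow (norm_nonneg u)]
  exact h

theorem stdGaussian_real_abs_inner_lt_le (u : E) {t : ℝ} (ht : 0 ≤ t) :
    (stdGaussian E).real {r | |⟪u, r⟫| < t * ‖u‖} ≤ t := by
  have hpre : {r | |⟪u, r⟫| < t * ‖u‖} =
      (fun r => ⟪u, r⟫) ⁻¹' Set.Ioo (-(t * ‖u‖)) (t * ‖u‖) := by
    ext r
    simp [abs_lt]
  rw [hpre, ← map_measureReal_apply (by fun_prop) measurableSet_Ioo, stdGaussian_map_inner]
  have h := gaussianReal_zero_Ioo_le (v := ‖u‖₊ ^ 2) ht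
  rwa [NNReal.coe_pow, coe_nnnorm, Real.sqrt_sq (norm_nonneg u)] at h

theorem integral_inner_sq_stdGaussian (u : E) : ∫ r, ⟪u, r⟫ ^ 2 ∂stdGaussian E = ‖u‖ ^ 2 := by
  rw [← innerSL_apply_norm (𝕜 := ℝ) u, ← variance_dual_stdGaussian,
    variance_of_integral_eq_zero (by fun_prop) (integral_strongDual_stdGaussian _)]
  simp

theorem integral_norm_sq_stdGaussian :
    ∫ r, ‖r‖ ^ 2 ∂stdGaussian E = Module.finrank ℝ E := by
  have integrable_inner_sq (u : E) : Integrable (fun r => ⟪u, r⟫ ^ 2) (stdGaussian E) :=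
    (IsGaussian.memLp_dual (stdGaussian E) (innerSL ℝ u) 2 (by simp)).integrable_sq
  simp_rw [← (stdOrthonormalBasis ℝ E).sum_sq_inner_right]
  rw [integral_finsetSum _ fun i _ => integrable_inner_sq _]
  simp [integral_inner_sq_stdGaussian]

section CardFilter

variable {Ω ι : Type*} (S : Finset ι) {A : ι → Set Ω} [∀ ω, DecidablePred fun i => ω ∈ A i]

theorem card_filter_mem_eq_sum_indicator (ω : Ω) :
    ((S.filter fun i => ω ∈ A i).card : ℝ) = ∑ i ∈ S, (A i).indicator 1 ω := by
  rw [Finset.natCast_card_filter]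
  simp only [Set.indicator_apply, Pi.one_apply]

variable [MeasurableSpace Ω] (μ : Measure Ω) [IsFiniteMeasure μ]

theorem integrable_indicator_one {B : Set Ω} (hB : MeasurableSet B) :
    Integrable (B.indicator (1 : Ω → ℝ)) μ :=
  (integrable_const 1).indicator hB

theorem integrable_card_filter (hA : ∀ i, MeasurableSet (A i)) :
    Integrable (fun ω => ((S.filter fun i => ω ∈ A i).card : ℝ)) μ := by
  simp_rw [card_filter_mem_eq_sum_indicator]
  exact integrable_finsetSum _ fun i _ => integrable_indicator_one μ (hA i)

theorem integral_card_filter (hA : ∀ i, MeasurableSet (A i)) :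
    ∫ ω, ((S.filter fun i => ω ∈ A i).card : ℝ) ∂μ = ∑ i ∈ S, μ.real (A i) := by
  simp_rw [card_filter_mem_eq_sum_indicator]
  rw [integral_finsetSum _ fun i _ => integrable_indicator_one μ (hA i)]
  exact Finset.sum_congr rfl fun i _ => integral_indicator_one (hA i)

end CardFilter

variable {ι : Type*} (u : ι → E) (S : Finset ι)

theorem exists_card_abs_inner_lt_le [Nontrivial E] {t : ℝ} (ht : 0 < t) :
    ∃ r : E, ‖r‖ ^ 2 ≤ 2 * Module.finrank ℝ E ∧
      ((S.filter fun i => |⟪u i, r⟫| < t * ‖u i‖).card : ℝ) ≤ 2 * (t * S.card) := by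
  rcases S.eq_empty_or_nonempty with rfl | hS
  · exact ⟨0, by simp, by simp⟩
  let A (i : ι) : Set E := {r | |⟪u i, r⟫| < t * ‖u i‖}
  have hA (i : ι) : MeasurableSet (A i) := measurableSet_lt (by fun_prop) (by fun_prop)
  have integral_card_le :
      ∫ r, ((S.filter fun i => r ∈ A i).card : ℝ) ∂stdGaussian E ≤ t * S.card := by
    rw [integral_card_filter S _ hA]
    refine (Finset.sum_le_card_nsmul S _ t fun i _ =>
      stdGaussian_real_abs_inner_lt_le (u i) ht.le).trans_eq ?_
    rw [nsmul_eq_mul, mul_comm]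
  exact exists_le_two_mul_and_le_two_mul (IsGaussian.memLp_two_id.integrable_norm_pow two_ne_zero)
    (integrable_card_filter S _ (A := A) hA) (fun _ => by positivity) (fun _ => by positivity)
    (Nat.cast_pos.2 Module.finrank_pos) (mul_pos ht (Nat.cast_pos.2 hS.card_pos))
    integral_norm_sq_stdGaussian.le integral_card_le

theorem exists_card_forall_abs_inner_lt_le [Nontrivial E] {t : ℝ} (ht : 0 < t) (m : ℕ) :
    ∃ r : Fin m → E, (∀ l, ‖r l‖ ^ 2 ≤ 2 * Module.finrank ℝ E) ∧
      ((S.filter fun i => ∀ l, |⟪u i, r l⟫| < t * ‖u i‖).card : ℝ) ≤ (2 * t) ^ m * S.card := by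
  induction m generalizing S with
  | zero => exact ⟨Fin.elim0, fun l => l.elim0, by simp⟩
  | succ m ih =>
    obtain ⟨r₀, hr₀, hcard₀⟩ := exists_card_abs_inner_lt_le u S ht
    obtain ⟨r, hr, hcard⟩ := ih (S.filter fun i => |⟪u i, r₀⟫| < t * ‖u i‖)
    refine ⟨Fin.cons r₀ r, Fin.cases hr₀ hr, ?_⟩
    simp only [Fin.forall_fin_succ, Fin.cons_zero, Fin.cons_succ]
    rw [Finset.filter_filter] at hcard
    refine hcard.trans ?_
    calc (2 * t) ^ m * _ ≤ (2 * t) ^ m * (2 * (t * S.card)) := by gcongr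
      _ = (2 * t) ^ (m + 1) * S.card := by ring

theorem exists_forall_exists_le_abs_inner [Nontrivial E] {t : ℝ} (ht : 0 < t) {m : ℕ}
    (hcard : (2 * t) ^ m * S.card < 1) :
    ∃ r : Fin m → E, (∀ l, ‖r l‖ ^ 2 ≤ 2 * Module.finrank ℝ E) ∧
      ∀ i ∈ S, ∃ l, t * ‖u i‖ ≤ |⟪u i, r l⟫| := by
  obtain ⟨r, hr, hle⟩ := exists_card_forall_abs_inner_lt_le u S ht m
  refine ⟨r, hr, fun i hi => ?_⟩
  have hempty : (S.filter fun i => ∀ l, |⟪u i, r l⟫| < t * ‖u i‖) = ∅ := by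
    rw [← Finset.card_eq_zero, ← Nat.cast_lt_one (α := ℝ)]
    exact hle.trans_lt hcard
  simpa using Finset.filter_eq_empty_iff.1 hempty hi

end GaussianProjection

namespace MLP

variable {d m h n : ℕ}

/-- Appends an affine layer to a network, so that its former output becomes a hidden layer. -/
def snoc : {m h : ℕ} → MLP m h → Matrix (Fin n) (Fin h) ℝ → (Fin n → ℝ) → MLP m n
  | _, _, .last W b, W', b' => .cons W b (.last W' b')
  | _, _, .cons W b net, W', b' => .cons W b (net.snoc W' b')

@[simp]
theorem eval_snoc (net : MLP m h) (W : Matrix (Fin n) (Fin h) ℝ) (b : Fin n → ℝ)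
    (x : Fin m → ℝ) : (net.snoc W b).eval x = W.mulVec (net.eval x)⁺ + b := by
  induction net with
  | last => rfl
  | cons _ _ _ ih => exact ih W _

@[simp]
theorem depth_snoc (net : MLP m h) (W : Matrix (Fin n) (Fin h) ℝ) (b : Fin n → ℝ) :
    (net.snoc W b).depth = net.depth + 1 := by
  induction net with
  | last => rfl
  | cons _ _ _ ih => simp only [snoc, depth, ih]

@[simp]
theorem width_snoc (net : MLP m h) (W : Matrix (Fin n) (Fin h) ℝ) (b : Fin n → ℝ) :
    (net.snoc W b).width = max net.width h := by
  induction net with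
  | last => exact max_comm _ _
  | cons _ _ _ ih => simp only [snoc, width, ih, max_assoc]

/-- Precomposes a network with the affine map `x ↦ R x + s`, absorbed into its first layer. -/
def precomp (R : Matrix (Fin m) (Fin d) ℝ) (s : Fin m → ℝ) : MLP m n → MLP d n
  | .last W b => .last (W * R) (W.mulVec s + b)
  | .cons W b net => .cons (W * R) (W.mulVec s + b) net

variable (R : Matrix (Fin m) (Fin d) ℝ) (s : Fin m → ℝ) (net : MLP m n)

@[simp]
theorem eval_precomp (x : Fin d → ℝ) : (net.precomp R s).eval x = net.eval (R.mulVec x + s) := by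
  cases net <;> simp only [precomp, eval, Matrix.mulVec_add, Matrix.mulVec_mulVec, add_assoc]

@[simp]
theorem depth_precomp : (net.precomp R s).depth = net.depth := by
  cases net <;> rfl

@[simp]
theorem width_precomp : (net.precomp R s).width = net.width := by
  cases net <;> rfl

end MLP

section AffineCombos

variable {α : Type*} {A B : Set (α → ℝ)} {g : α → ℝ}

/-- The functions that are affine combinations of functions in `A`, constants included: what a
single output of an affine layer can compute from the inputs `A`. -/
def affineCombos (A : Set (α → ℝ)) : Submodule ℝ (α → ℝ) := Submodule.span ℝ (insert 1 A)

theorem subset_affineCombos (A : Set (α → ℝ)) : A ⊆ affineCombos A :=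
  (Set.subset_insert 1 A).trans Submodule.subset_span

theorem const_mem_affineCombos (A : Set (α → ℝ)) (c : ℝ) : (fun _ => c) ∈ affineCombos A := by
  convert (affineCombos A).smul_mem c (Submodule.subset_span (Set.mem_insert 1 A)) using 1
  ext
  simp

theorem affineCombos_le_iff : affineCombos A ≤ affineCombos B ↔ A ⊆ affineCombos B := by
  refine ⟨(subset_affineCombos A).trans, fun h => Submodule.span_le.2 (Set.insert_subset ?_ h)⟩
  exact const_mem_affineCombos B 1

theorem affineCombos_mono (h : A ⊆ B) : affineCombos A ≤ affineCombos B :=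
  affineCombos_le_iff.2 (h.trans (subset_affineCombos B))

theorem exists_weights_of_mem_affineCombos_range {κ : Type*} [Fintype κ] {F : κ → α → ℝ}
    (hg : g ∈ affineCombos (Set.range F)) :
    ∃ (w : κ → ℝ) (b : ℝ), ∀ x, g x = ∑ j, w j * F j x + b := by
  obtain ⟨b, f, hf, rfl⟩ := Submodule.mem_span_insert.1 hg
  obtain ⟨w, rfl⟩ := Submodule.mem_span_range_iff_exists_fun ℝ |>.1 hf
  exact ⟨w, b, fun x => by simp [add_comm]⟩

theorem encard_insert_add_le {M : Type*} {B : Set M} {a : M} {c K : ℕ∞}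
    (hB : B.encard + (c + 1) ≤ K) : (insert a B).encard + c ≤ K := by
  refine le_trans ?_ hB
  rw [add_comm c, ← add_assoc]
  gcongr
  exact Set.encard_insert_le B a

theorem exists_subset_range_fin_of_encard_le {M : Type*} [Zero M] {B : Set M} {k : ℕ}
    (hB : B.encard ≤ k) :
    ∃ g : Fin k → M, B ⊆ Set.range g ∧ Set.range g ⊆ insert 0 B := by
  obtain ⟨hfin, hcard⟩ := Set.encard_le_coe_iff_finite_ncard_le.1 hB
  have := hfin.fintype
  obtain ⟨e⟩ : Nonempty (B ↪ Fin k) := Function.Embedding.nonempty_of_card_le (by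
    rwa [Fintype.card_fin, ← Set.toFinset_card, ← Set.ncard_eq_toFinset_card'])
  refine ⟨Function.extend e (↑) 0, fun b hb => ⟨e ⟨b, hb⟩, e.injective.extend_apply _ _ _⟩, ?_⟩
  refine (Set.range_extend_subset _ _ _).trans (Set.union_subset ?_ ?_)
  · rw [Subtype.range_coe]
    exact Set.subset_insert 0 B
  · rintro _ ⟨_, _, rfl⟩
    exact Set.mem_insert 0 B

theorem exists_affine_layer {h k : ℕ} {F : α → Fin h → ℝ}
    (hB : B ⊆ affineCombos (Set.range fun j x => F x j)) (hcard : B.encard ≤ k) :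
    ∃ (W : Matrix (Fin k) (Fin h) ℝ) (b : Fin k → ℝ),
      ∀ g ∈ B, ∃ i, ∀ x, g x = (W.mulVec (F x) + b) i := by
  obtain ⟨f, hBf, hfB⟩ := exists_subset_range_fin_of_encard_le hcard
  have hf (i : Fin k) : f i ∈ affineCombos (Set.range fun j x => F x j) :=
    Set.insert_subset (zero_mem _) hB (hfB (Set.mem_range_self i))
  choose w b hwb using fun i => exists_weights_of_mem_affineCombos_range (hf i)
  refine ⟨w, b, fun g hg => ?_⟩
  obtain ⟨i, rfl⟩ := hBf hg
  exact ⟨i, hwb i⟩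

end AffineCombos

/-- `AffineInLayer k n A`: some network whose `n`-th hidden layer, and every earlier one, has
width at most `k` computes every function in `A` as an affine combination of the units in its
`n`-th hidden layer. The network is truncated there, so `n` is its depth before that ReLU. -/
def AffineInLayer {d : ℕ} (k n : ℕ) (A : Set ((Fin d → ℝ) → ℝ)) : Prop :=
  ∃ net : MLP d k, net.depth = n ∧ net.width ≤ k ∧
    A ⊆ affineCombos (Set.range fun i x => (net.eval x)⁺ i)

theorem affineInLayer_one {d k : ℕ} {B : Set ((Fin d → ℝ) → ℝ)}
    (hB : B ⊆ affineCombos (Set.range fun i (x : Fin d → ℝ) => x i)) (hcard : B.encard ≤ k) :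
    AffineInLayer k 1 ((·⁺) '' B) := by
  obtain ⟨W, b, hWb⟩ := exists_affine_layer hB hcard
  refine ⟨.last W b, rfl, Nat.zero_le k, ?_⟩
  rintro _ ⟨g, hg, rfl⟩
  obtain ⟨i, hi⟩ := hWb g hg
  exact subset_affineCombos _ ⟨i, funext fun x => by simp [hi, MLP.eval]⟩

namespace AffineInLayer

variable {d k n : ℕ} {A B : Set ((Fin d → ℝ) → ℝ)} {v w g : (Fin d → ℝ) → ℝ}

theorem mono (hA : AffineInLayer k n A) (hB : B ⊆ affineCombos A) : AffineInLayer k n B := by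
  obtain ⟨net, hdepth, hwidth, hnet⟩ := hA
  exact ⟨net, hdepth, hwidth, hB.trans (affineCombos_le_iff.2 hnet)⟩

theorem image_posPart (hA : AffineInLayer k n A) (hB : B ⊆ affineCombos A)
    (hcard : B.encard ≤ k) : AffineInLayer k (n + 1) ((·⁺) '' B) := by
  obtain ⟨net, rfl, hwidth, hnet⟩ := hA.mono hB
  obtain ⟨W, b, hWb⟩ := exists_affine_layer hnet hcard
  refine ⟨net.snoc W b, net.depth_snoc W b, by simpa using hwidth, ?_⟩
  rintro _ ⟨g, hg, rfl⟩
  obtain ⟨i, hi⟩ := hWb g hg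
  exact subset_affineCombos _ ⟨i, funext fun x => by simp [hi]⟩

theorem exists_eval_eq (hA : AffineInLayer k n A) (hg : g ∈ A) :
    ∃ net : MLP d 1, net.depth = n + 1 ∧ net.width = k ∧ ∀ x, net.eval x 0 = g x := by
  obtain ⟨net, rfl, hwidth, hnet⟩ := hA
  obtain ⟨W, b, hWb⟩ := exists_affine_layer (k := 1)
    (Set.singleton_subset_iff.2 (hnet hg)) (Set.encard_singleton g).le
  obtain ⟨i, hi⟩ := hWb g rfl
  refine ⟨net.snoc W b, net.depth_snoc W b, by simpa using hwidth, fun x => ?_⟩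
  rw [MLP.eval_snoc, hi, Subsingleton.elim i 0]

theorem insert_posPart (hA : AffineInLayer k n A) (hA_nonneg : ∀ f ∈ A, 0 ≤ f)
    (hcard : A.encard + 1 ≤ k) (hg : g ∈ affineCombos A) :
    AffineInLayer k (n + 1) (insert g⁺ A) := by
  have h := hA.image_posPart (Set.insert_subset hg (subset_affineCombos A))
    ((Set.encard_insert_le A g).trans hcard)
  rwa [Set.image_insert_eq, Set.image_congr fun f hf => posPart_of_nonneg (hA_nonneg f hf),
    Set.image_id'] at h

theorem insert_sup (hA : AffineInLayer k n A) (hA_nonneg : ∀ f ∈ A, 0 ≤ f)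
    (hcard : A.encard + 1 ≤ k) (hv : v ∈ affineCombos A) (hw : w ∈ affineCombos A) :
    AffineInLayer k (n + 1) (insert (w ⊔ v) A) := by
  refine (hA.insert_posPart hA_nonneg hcard (sub_mem hw hv)).mono (Set.insert_subset ?_ ?_)
  · rw [sup_eq_add_posPart_sub]
    exact add_mem (affineCombos_mono (Set.subset_insert _ A) hv)
      (subset_affineCombos _ (Set.mem_insert _ A))
  · exact (Set.subset_insert _ A).trans (subset_affineCombos _)

theorem insert_sum_posPart {κ : Type*} {f : κ → (Fin d → ℝ) → ℝ} (hA : AffineInLayer k n A)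
    (hA_nonneg : ∀ f ∈ A, 0 ≤ f) (hcard : A.encard + 2 ≤ k) (hf : ∀ l, f l ∈ affineCombos A)
    (T : Finset κ) : AffineInLayer k (n + T.card) (insert (∑ l ∈ T, (f l)⁺) A) := by
  classical
  induction T using Finset.induction_on with
  | empty =>
    exact hA.mono (Set.insert_subset (zero_mem _) (subset_affineCombos A))
  | insert l T hl ih =>
    set s := ∑ l ∈ T, (f l)⁺ with hs
    rw [Finset.card_insert_of_notMem hl, Finset.sum_insert hl, ← hs, ← add_assoc]
    have hs_nonneg : ∀ f ∈ insert s A, 0 ≤ f :=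
      Set.forall_insert_of_forall hA_nonneg (Finset.sum_nonneg fun l _ => posPart_nonneg (f l))
    refine (ih.insert_posPart hs_nonneg (encard_insert_add_le hcard)
      (affineCombos_mono (Set.subset_insert s A) (hf l))).mono (Set.insert_subset ?_ ?_)
    · exact add_mem (subset_affineCombos _ (Set.mem_insert _ _))
        (subset_affineCombos _ (Set.mem_insert_of_mem _ (Set.mem_insert _ _)))
    · exact ((Set.subset_insert _ A).trans (Set.subset_insert _ _)).trans (subset_affineCombos _)

/-- The `3` extra units hold the running maximum, the running sum and the current hinge. -/
theorem insert_fold_max {ι κ : Type*} [Fintype κ] {f : ι → κ → (Fin d → ℝ) → ℝ}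
    {w : ι → (Fin d → ℝ) → ℝ} (hA : AffineInLayer k n A) (hA_nonneg : ∀ f ∈ A, 0 ≤ f)
    (hcard : A.encard + 3 ≤ k) (hf : ∀ i l, f i l ∈ affineCombos A)
    (hw : ∀ i, w i ∈ affineCombos {∑ l, (f i l)⁺}) (J : Finset ι) :
    AffineInLayer k (n + J.card * (Fintype.card κ + 1))
      (insert (fun x => J.fold max 0 fun i => w i x) A) := by
  classical
  induction J using Finset.induction_on with
  | empty =>
    simpa [Pi.zero_def] using hA.mono (Set.insert_subset (zero_mem _) (subset_affineCombos A))
  | insert i J hi ih =>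
    set v := fun x => J.fold max 0 fun i => w i x
    set s := ∑ l, (f i l)⁺
    have hv_nonneg : ∀ f ∈ insert v A, 0 ≤ f :=
      Set.forall_insert_of_forall hA_nonneg fun x => Finset.le_fold_max 0 |>.2 (.inl le_rfl)
    have hs_nonneg : ∀ f ∈ insert s (insert v A), 0 ≤ f :=
      Set.forall_insert_of_forall hv_nonneg (Finset.sum_nonneg fun l _ => posPart_nonneg _)
    have hcard_v : (insert v A).encard + 2 ≤ k := encard_insert_add_le hcard
    have hsum := ih.insert_sum_posPart hv_nonneg hcard_v
      (fun l => affineCombos_mono (Set.subset_insert v A) (hf i l)) Finset.univ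
    have hmax := hsum.insert_sup hs_nonneg (encard_insert_add_le hcard_v) (v := v) (w := w i)
      (subset_affineCombos _ (Set.mem_insert_of_mem _ (Set.mem_insert _ _)))
      (affineCombos_mono (Set.singleton_subset_iff.2 (Set.mem_insert s _)) (hw i))
    have hfold : (fun x => (insert i J).fold max 0 fun i => w i x) = w i ⊔ v := by
      ext x
      exact Finset.fold_insert hi
    rw [hfold, Finset.card_insert_of_notMem hi, add_one_mul, ← add_assoc, ← add_assoc]
    refine hmax.mono ((Set.insert_subset_insert ?_).trans (subset_affineCombos _))
    exact (Set.subset_insert v A).trans (Set.subset_insert s _)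

end AffineInLayer

section BoxMemorization

variable {m : ℕ} {c c' z : Fin m → ℝ} {a δ : ℝ}

/-- The `2m` affine functions that are nonpositive exactly on the sup-norm ball of radius `a`
around `c`, two for each coordinate. -/
def boxFace (c : Fin m → ℝ) (a : ℝ) : Fin m ⊕ Fin m → (Fin m → ℝ) → ℝ
  | .inl l, z => z l - c l - a
  | .inr l, z => c l - z l - a

/-- The sum of the violations of the inequalities `boxFace c a l z ≤ 0`: a piecewise linear gauge
of how far `z` is from the sup-norm ball of radius `a` around `c`. -/
def boxGap (c : Fin m → ℝ) (a : ℝ) (z : Fin m → ℝ) : ℝ := ∑ l, (boxFace c a l z)⁺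

theorem boxGap_nonneg (c : Fin m → ℝ) (a : ℝ) (z : Fin m → ℝ) : 0 ≤ boxGap c a z :=
  Finset.sum_nonneg fun _ _ => posPart_nonneg _

theorem boxFace_le_boxGap (c : Fin m → ℝ) (a : ℝ) (l : Fin m ⊕ Fin m) (z : Fin m → ℝ) :
    boxFace c a l z ≤ boxGap c a z :=
  (le_posPart _).trans (Finset.single_le_sum (f := fun l => (boxFace c a l z)⁺)
    (fun _ _ => posPart_nonneg _) (Finset.mem_univ l))

theorem boxGap_eq_zero (hz : z ∈ Metric.closedBall c a) : boxGap c a z = 0 := by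
  refine Finset.sum_eq_zero fun l _ => posPart_eq_zero.2 ?_
  have abs_le (l : Fin m) : |z l - c l| ≤ a := (dist_le_pi_dist z c l).trans hz
  rcases l with l | l <;> simp only [boxFace] <;> linarith [abs_sub_le_iff.1 (abs_le l)]

theorem le_boxGap {r : ℝ} (hr : 0 < r) (hz : r ≤ dist z c) : r - a ≤ boxGap c a z := by
  obtain ⟨l, hl⟩ : ∃ l, r ≤ |z l - c l| := by
    by_contra! h
    exact hz.not_gt ((dist_pi_lt_iff hr).2 h)
  rcases le_abs.1 hl with h | h
  · exact le_trans (by simp only [boxFace]; linarith) (boxFace_le_boxGap c a (.inl l) z)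
  · exact le_trans (by simp only [boxFace]; linarith) (boxFace_le_boxGap c a (.inr l) z)

/-- The affine function of the gap that equals `y` on the sup-norm ball of radius `a` around `c`
and is nonpositive at distance at least `δ - a` from `c`. -/
def boxBump (c : Fin m → ℝ) (a δ y : ℝ) (z : Fin m → ℝ) : ℝ :=
  y - y / (δ - 2 * a) * boxGap c a z

theorem fold_max_boxBump_eq {ι : Type*} [Fintype ι] {c : ι → Fin m → ℝ} {y : ι → ℝ}
    (hy : ∀ i, 0 ≤ y i) (ha : 2 * a < δ) (hsep : ∀ i j, y i ≠ y j → δ ≤ dist (c i) (c j))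
    {i : ι} (hz : z ∈ Metric.closedBall (c i) a) :
    Finset.univ.fold max 0 (fun j => boxBump (c j) a δ (y j) z) = y i := by
  have hgap : 0 < δ - 2 * a := sub_pos.2 ha
  have a_nonneg : 0 ≤ a := dist_nonneg.trans hz
  have bump_self : boxBump (c i) a δ (y i) z = y i := by simp [boxBump, boxGap_eq_zero hz]
  have bump_le (j : ι) : boxBump (c j) a δ (y j) z ≤ y i := by
    have slope_nonneg : 0 ≤ y j / (δ - 2 * a) := div_nonneg (hy j) hgap.le
    by_cases hij : y i = y j
    · rw [hij]
      exact sub_le_self _ (mul_nonneg slope_nonneg (boxGap_nonneg _ _ _))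
    · have hdist : δ - a ≤ dist z (c j) := by
        have : dist z (c i) ≤ a := hz
        linarith [hsep i j hij, dist_triangle_left (c i) (c j) z]
      calc boxBump (c j) a δ (y j) z
          ≤ y j - y j / (δ - 2 * a) * (δ - 2 * a) := by
            unfold boxBump
            gcongr
            exact (le_boxGap (by linarith) hdist).trans' (by linarith)
        _ = 0 := by rw [div_mul_cancel₀ _ hgap.ne', sub_self]
        _ ≤ y i := hy i
  refine le_antisymm ((Finset.fold_max_le _).2 ⟨hy i, fun j _ => bump_le j⟩) ?_
  exact (Finset.le_fold_max _).2 (.inr ⟨i, Finset.mem_univ i, bump_self.ge⟩)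

theorem boxFace_mem_affineCombos (c : Fin m → ℝ) (a : ℝ) (l : Fin m ⊕ Fin m) {α : Type*}
    (F : α → Fin m → ℝ) :
    (fun x => boxFace c a l (F x)) ∈ affineCombos (Set.range fun i x => F x i) := by
  have coord_mem (l : Fin m) : (fun x => F x l) ∈ affineCombos (Set.range fun i x => F x i) :=
    subset_affineCombos _ ⟨l, rfl⟩
  rcases l with l | l
  · exact sub_mem (sub_mem (coord_mem l) (const_mem_affineCombos _ _)) (const_mem_affineCombos _ _)
  · exact sub_mem (sub_mem (const_mem_affineCombos _ _) (coord_mem l)) (const_mem_affineCombos _ _)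

theorem exists_mlp_eval_eq_fold_max_boxBump {k : ℕ} (hk : m + 3 ≤ k) {ι : Type*} [Fintype ι]
    (c : ι → Fin m → ℝ)
    (a δ : ℝ) (y : ι → ℝ) :
    ∃ net : MLP m 1, net.depth = Fintype.card ι * (2 * m + 1) + 2 ∧ net.width = k ∧
      ∀ x, net.eval x 0 = Finset.univ.fold max 0 fun i => boxBump (c i) a δ (y i) x⁺ := by
  set coords := Set.range fun l (x : Fin m → ℝ) => x⁺ l
  have card_range (f : Fin m → (Fin m → ℝ) → ℝ) : (Set.range f).encard ≤ m := by
    simpa [Set.image_univ] using Set.encard_image_le f Set.univ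
  have coords_nonneg : ∀ f ∈ coords, 0 ≤ f := by
    rintro _ ⟨l, rfl⟩ x
    exact posPart_nonneg _
  have first_layer : AffineInLayer k 1 coords := by
    have h := affineInLayer_one (subset_affineCombos (Set.range fun l (x : Fin m → ℝ) => x l))
      ((card_range _).trans (Nat.cast_le.2 (by lia : m ≤ k)))
    rwa [← Set.range_comp] at h
  have last_layer := first_layer.insert_fold_max coords_nonneg
    (f := fun i l x => boxFace (c i) a l x⁺) (w := fun i x => boxBump (c i) a δ (y i) x⁺)
    ((add_le_add_left (card_range _) 3).trans (Nat.cast_le.2 hk))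
    (fun i l => boxFace_mem_affineCombos (c i) a l (·⁺)) (fun i => ?_) Finset.univ
  · obtain ⟨net, hdepth, hwidth, heval⟩ := last_layer.exists_eval_eq (Set.mem_insert _ _)
    refine ⟨net, ?_, hwidth, heval⟩
    rw [hdepth, Finset.card_univ, Fintype.card_sum, Fintype.card_fin]
    ring
  · refine sub_mem (const_mem_affineCombos _ _) (Submodule.smul_mem _ _ ?_)
    refine subset_affineCombos _ ?_
    ext x
    simp [boxGap]

theorem exists_mlp_eq_on_closedBall {k : ℕ} (hk : m + 3 ≤ k) {ι : Type*} [Fintype ι]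
    {c : ι → Fin m → ℝ} {y : ι → ℝ} (hy : ∀ i, 0 ≤ y i) (ha : 2 * a < δ)
    (hsep : ∀ i j, y i ≠ y j → δ ≤ dist (c i) (c j)) :
    ∃ net : MLP m 1, net.depth = Fintype.card ι * (2 * m + 1) + 2 ∧ net.width = k ∧
      ∀ i, ∀ x ∈ Metric.closedBall (c i) a, net.eval x 0 = y i := by
  obtain ⟨s, hs⟩ : ∃ s : Fin m → ℝ, ∀ i, ∀ x ∈ Metric.closedBall (c i) a, 0 ≤ x + s := by
    obtain ⟨b, hb⟩ := (Bornology.isBounded_iUnion.2 fun i =>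
      Metric.isBounded_closedBall (x := c i) (r := a)).bddBelow
    exact ⟨-b, fun i x hx => by simpa [sub_eq_add_neg] using hb (Set.mem_iUnion_of_mem i hx)⟩
  obtain ⟨net, hdepth, hwidth, heval⟩ :=
    exists_mlp_eval_eq_fold_max_boxBump hk (fun i => c i + s) a δ y
  refine ⟨net.precomp 1 s, by simpa, by simpa, fun i x hx => ?_⟩
  rw [MLP.eval_precomp, Matrix.one_mulVec, heval, posPart_of_nonneg (hs i x hx)]
  exact fold_max_boxBump_eq hy ha (by simpa using hsep) (by simpa using hx)

end BoxMemorization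

section RobustMemorization

variable {N d m k : ℕ}

theorem exists_matrix_norm_mulVec_le_and_le_norm_mulVec (hd : 0 < d) {ι : Type*}
    (u : ι → Fin d → ℝ) (S : Finset ι) {t : ℝ} (ht : 0 < t) (hcard : (2 * t) ^ m * S.card < 1) :
    ∃ R : Matrix (Fin m) (Fin d) ℝ, (∀ x, ‖R.mulVec x‖ ≤ √(2 * d) * lpNorm 2 x) ∧
      ∀ i ∈ S, t * lpNorm 2 (u i) ≤ ‖R.mulVec (u i)‖ := by
  have : Nonempty (Fin d) := ⟨⟨0, hd⟩⟩
  obtain ⟨r, hr, hsep⟩ := exists_forall_exists_le_abs_inner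
    (fun i => WithLp.toLp 2 (u i) : ι → EuclideanSpace ℝ (Fin d)) S ht hcard
  rw [finrank_euclideanSpace_fin] at hr
  let R : Matrix (Fin m) (Fin d) ℝ := .of fun l => r l
  have mulVec_eq (x : Fin d → ℝ) (l : Fin m) : R.mulVec x l = inner ℝ (WithLp.toLp 2 x) (r l) := by
    simp [R, Matrix.mulVec, dotProduct, PiLp.inner_apply]
  simp only [lpNorm_two_eq_norm]
  refine ⟨R, fun x => (pi_norm_le_iff_of_nonneg (by positivity)).2 fun l => ?_, fun i hi => ?_⟩
  · rw [mulVec_eq, mul_comm]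
    refine (norm_inner_le_norm _ _).trans ?_
    gcongr
    exact Real.le_sqrt_of_sq_le (hr l)
  · obtain ⟨l, hl⟩ := hsep i hi
    rw [← mulVec_eq] at hl
    exact hl.trans (norm_le_pi_norm (R.mulVec (u i)) l)

theorem exists_mlp_robustMem_two (hd : 0 < d) (hk : m + 3 ≤ k) {X : Fin N → Fin d → ℝ}
    {Y : Fin N → ℕ} {t ε Δ : ℝ} (ht : 0 < t) (hcard : (2 * t) ^ m * N ^ 2 < 1)
    (hsep : ∀ i j, Y i ≠ Y j → Δ ≤ lpNorm 2 (X i - X j)) (hε : 2 * (√(2 * d) * ε) < t * Δ) :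
    ∃ net : MLP d 1, net.depth = N * (2 * m + 1) + 2 ∧ net.width = k ∧
      RobustMem 2 ε X Y fun x => net.eval x 0 := by
  obtain ⟨R, hR_le, hR_ge⟩ := exists_matrix_norm_mulVec_le_and_le_norm_mulVec hd
    (fun a : Fin N × Fin N => X a.1 - X a.2) Finset.univ ht (by simpa [sq] using hcard)
  have dist_mulVec (x x' : Fin d → ℝ) : dist (R.mulVec x) (R.mulVec x') = ‖R.mulVec (x - x')‖ := by
    rw [dist_eq_norm, Matrix.mulVec_sub]
  have center_dist (i j : Fin N) (hij : (Y i : ℝ) ≠ Y j) :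
      t * Δ ≤ dist (R.mulVec (X i)) (R.mulVec (X j)) := by
    rw [dist_mulVec]
    refine (hR_ge (i, j) (Finset.mem_univ _)).trans' ?_
    gcongr
    exact hsep i j fun h => hij (congrArg _ h)
  obtain ⟨net, hdepth, hwidth, heval⟩ := exists_mlp_eq_on_closedBall hk
    (c := fun i => R.mulVec (X i)) (fun i => (Y i).cast_nonneg) hε center_dist
  refine ⟨net.precomp R 0, by simpa using hdepth, by simpa using hwidth, fun i x hx => ?_⟩
  simp only [MLP.eval_precomp, add_zero]
  refine heval i _ ?_
  rw [Metric.mem_closedBall, dist_mulVec]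
  exact (hR_le _).trans (by gcongr)

theorem rpow_neg_two_div_pow_mul_sq (hN : 0 < N) (hm : 0 < m) :
    ((N : ℝ) ^ (-(2 : ℝ) / m)) ^ m * (N : ℝ) ^ 2 = 1 := by
  rw [← Real.rpow_mul_natCast (by positivity), div_mul_cancel₀ _ (by positivity),
    Real.rpow_neg (by positivity), Real.rpow_two, inv_mul_cancel₀ (by positivity)]

theorem rpow_dimension_factor_eq (hd : 0 < d) (p q : ℝ≥0∞) :
    (d : ℝ) ^ (-(1 : ℝ) / 2 + min ((1 : ℝ) / 2 - rinv q) 0 + min (rinv p - 1 / 2) 0) =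
      cminus q d / (√d * cplus p d) := by
  have hd' : (0 : ℝ) < d := Nat.cast_pos.2 hd
  have inv_sqrt : (d : ℝ) ^ (-(1 : ℝ) / 2) = (√d)⁻¹ := by
    rw [neg_div, Real.rpow_neg hd'.le, Real.sqrt_eq_rpow]
  have inv_cplus : (d : ℝ) ^ min (rinv p - 1 / 2) 0 = (cplus p d)⁻¹ := by
    rw [cplus, ← Real.rpow_neg hd'.le, ← min_neg_neg, neg_sub, neg_zero]
  rw [Real.rpow_add hd', Real.rpow_add hd', inv_sqrt, inv_cplus, ← cminus]
  field_simp

theorem projected_radius_lt_of_ratio_le {σ δ a b s ρ : ℝ} (hδ : 0 < δ) (ha : 0 < a) (hb : 0 < b)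
    (hs : 0 < s) (hρ : 0 < ρ)
    (hratio : σ / δ ≤ 1 / (8 * √(Real.exp 1)) * (a / (s * b)) * ρ) :
    2 * (√2 * s * (b * σ)) < ρ / 4 * (a * δ) := by
  have sqrt_ratio_lt : √2 / √(Real.exp 1) < 1 := by
    rw [div_lt_one (by positivity)]
    exact Real.sqrt_lt_sqrt zero_le_two (by linarith [Real.exp_one_gt_d9])
  calc 2 * (√2 * s * (b * σ))
      ≤ 2 * (√2 * s * (b * (1 / (8 * √(Real.exp 1)) * (a / (s * b)) * ρ * δ))) := by
        gcongr
        exact (div_le_iff₀ hδ).1 hratio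
    _ = √2 / √(Real.exp 1) * (ρ / 4 * (a * δ)) := by
        field_simp
        norm_num
    _ < ρ / 4 * (a * δ) := mul_lt_of_lt_one_left (by positivity) sqrt_ratio_lt

theorem robust_memorization_small_width_q_general {p q : ℝ≥0∞} {σ δ : ℝ} (hN : 0 < N) (hd : 0 < d)
    (hm : 0 < m) (hk : m + 3 ≤ k) (hp : 0 < p) (hq : 0 < q) (hδ : 0 < δ)
    (hratio : σ / δ ≤ (1 / (8 * √(Real.exp 1))) *
      (d : ℝ) ^ (-(1 : ℝ) / 2 + min ((1 : ℝ) / 2 - rinv q) 0 + min (rinv p - 1 / 2) 0) *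
      (N : ℝ) ^ (-(2 : ℝ) / m))
    (X : Fin N → Fin d → ℝ) (Y : Fin N → ℕ)
    (hsep : ∀ i j, Y i ≠ Y j → δ ≤ lpNorm q (X i - X j)) :
    ∃ net : MLP d 1, net.depth = N * (2 * m + 1) + 2 ∧ net.width = k ∧
      RobustMem p σ X Y fun x => net.eval x 0 := by
  have hcplus : 0 < cplus p d := by unfold cplus; positivity
  have hcminus : 0 < cminus q d := by unfold cminus; positivity
  set ρ := (N : ℝ) ^ (-(2 : ℝ) / m)
  have hρ : 0 < ρ := by positivity
  have union_bound : (2 * (ρ / 4)) ^ m * (N : ℝ) ^ 2 < 1 :=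
    calc (2 * (ρ / 4)) ^ m * (N : ℝ) ^ 2 = (1 / 2) ^ m * (ρ ^ m * N ^ 2) := by
          rw [← mul_assoc, ← mul_pow]; ring
      _ = (1 / 2) ^ m := by rw [rpow_neg_two_div_pow_mul_sq hN hm, mul_one]
      _ < 1 := pow_lt_one₀ (by norm_num) (by norm_num) hm.ne'
  have separated_two (i j : Fin N) (hij : Y i ≠ Y j) :
      cminus q d * δ ≤ lpNorm 2 (X i - X j) := by
    refine (cminus_mul_lpNorm_le_lpNorm_two hd hq _).trans' ?_
    gcongr
    exact hsep i j hij
  have radius_lt : 2 * (√(2 * d) * (cplus p d * σ)) < ρ / 4 * (cminus q d * δ) := by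
    rw [rpow_dimension_factor_eq hd] at hratio
    rw [Real.sqrt_mul zero_le_two]
    exact projected_radius_lt_of_ratio_le hδ hcminus hcplus (by positivity) hρ hratio
  obtain ⟨net, hdepth, hwidth, hmem⟩ :=
    exists_mlp_robustMem_two hd hk (by positivity) union_bound separated_two radius_lt
  refine ⟨net, hdepth, hwidth, fun i x hx => hmem i x ?_⟩
  refine (lpNorm_two_le_cplus_mul_lpNorm hp _).trans ?_
  gcongr

theorem depth_le_mul_logb (hN : 0 < N) (hk : m + 3 ≤ k) :
    ((N * (2 * m + 1) + 2 : ℕ) : ℝ) ≤ 2 * N * k * Real.logb 2 k := by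
  have one_le_logb : 1 ≤ Real.logb 2 k := by
    rw [Real.le_logb_iff_rpow_le one_lt_two (by norm_cast; lia), Real.rpow_one]
    norm_cast
    lia
  calc ((N * (2 * m + 1) + 2 : ℕ) : ℝ) ≤ ((2 * N * k : ℕ) : ℝ) := by
        gcongr
        nlinarith
    _ = 2 * N * k * 1 := by push_cast; ring
    _ ≤ 2 * N * k * Real.logb 2 k := by gcongr

end RobustMemorization

/-- **Robust memorization with small width, `l_q` separation** (upper bound). -/
theorem robust_memorization_small_width_q :
    ∃ C₀ : ℝ, 0 < C₀ ∧
      ∀ (N d C k : ℕ) (p q : ℝ≥0∞) (σ δ : ℝ),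
        2 ≤ N → 2 ≤ d → 2 ≤ C → 0 < p → 1 ≤ q → 7 ≤ k → k ≤ d + 5 → 0 < σ → 0 < δ →
        σ / δ ≤ (1 / (8 * Real.sqrt (Real.exp 1))) *
            (d : ℝ) ^ (-(1 : ℝ) / 2 + min ((1 : ℝ) / 2 - rinv q) 0 + min (rinv p - 1 / 2) 0) *
            (N : ℝ) ^ (-(2 : ℝ) / ((k : ℝ) - 6)) →
        ∀ (X : Fin N → Fin d → ℝ) (Y : Fin N → ℕ),
          (∀ i, 1 ≤ Y i ∧ Y i ≤ C) → Separated q δ X Y →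
          ∃ net : MLP d 1, net.width = k ∧
            (net.depth : ℝ) ≤ C₀ * N * k * Real.logb 2 k ∧
            RobustMem p σ X Y (fun x => net.eval x 0) := by
  refine ⟨2, two_pos, fun N d C k p q σ δ hN hd _ hp hq hk _ _ hδ hratio X Y _ hsep => ?_⟩
  obtain ⟨m, rfl⟩ : ∃ m, k = m + 6 := ⟨k - 6, by lia⟩
  obtain ⟨net, hdepth, hwidth, hmem⟩ :=
    robust_memorization_small_width_q_general (m := m) (k := m + 6) (by lia) (by lia) (by lia)
      (by lia) hp (one_pos.trans_le hq) hδ (by simpa using hratio) X Y hsep.1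
  exact ⟨net, hwidth, hdepth ▸ depth_le_mul_logb (by lia) (by lia), hmem⟩

end
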